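/- Let a, c ∈ ℝ and b ≠ 0, set D := (a−c)² + 4b² > 0, and let û₁ := (0, (a−c−√D)/(2b), 1)/ρ₁ and û₃ := (0, (a−c+√D)/(2b), 1)/ρ₂ (with ρ₁, ρ₂ > 0 normalizing factors) be the unit eigenvectors of U₁ := [[d,0,0],[0,a,b],[0,b,c]] corresponding to the eigenvalues (a+c−√D)/2 and (a+c+√D)/2 respectively. Then: (a) if (û₁ · ê_A) = −(û₃ · ê_A), where ê_A := (0,1,0), then a = c; (b) (û₁ · ê_B) ≠ −(û₃ · ê_B), where ê_B := (0,1,1)/√2, unless a = c. (Hence the conventional compound twin pairs of the cubic-to-monoclinic-II transformation cannot form two distinct triple clusters of the same kind with austenite.) -/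

import Mathlib

open Matrix

noncomputable section

abbrev V3 : Type := Fin 3 → ℝ
abbrev M3 : Type := Matrix (Fin 3) (Fin 3) ℝ

/-- **Compound twins of the cubic-to-monoclinic-II transformation cannot form
two distinct triple clusters of the same kind.** With `b ≠ 0`,
`D = (a−c)² + 4b²`, and `û₁, û₃` the unit eigenvectors of
`U₁ = [[d,0,0],[0,a,b],[0,b,c]]` given by the stated formulas:
(a) `(û₁·ê_A) = −(û₃·ê_A)` (with `ê_A = (0,1,0)`) implies `a = c`;
(b) `(û₁·ê_B) = −(û₃·ê_B)` (with `ê_B = (0,1,1)/√2`) implies `a = c`. -/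
theorem monoclinic_compound_no_double_cluster
    (a b c d : ℝ) (hb : b ≠ 0)
    (D : ℝ) (hD : D = (a - c) ^ 2 + 4 * b ^ 2) (hDpos : 0 < D)
    (ρ1 ρ2 : ℝ) (hρ1 : 0 < ρ1) (hρ2 : 0 < ρ2)
    (u1 u3 : V3)
    (hu1 : u1 = (1 / ρ1) • ![0, (a - c - Real.sqrt D) / (2 * b), 1])
    (hu3 : u3 = (1 / ρ2) • ![0, (a - c + Real.sqrt D) / (2 * b), 1])
    (hu1unit : u1 ⬝ᵥ u1 = 1) (hu3unit : u3 ⬝ᵥ u3 = 1)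
    (U1 : M3) (hU1 : U1 = !![d, 0, 0; 0, a, b; 0, b, c])
    (heig1 : U1.mulVec u1 = ((a + c - Real.sqrt D) / 2) • u1)
    (heig3 : U1.mulVec u3 = ((a + c + Real.sqrt D) / 2) • u3)
    (eA eB : V3) (heA : eA = ![0, 1, 0])
    (heB : eB = (1 / Real.sqrt 2) • ![0, 1, 1]) :
    (u1 ⬝ᵥ eA = -(u3 ⬝ᵥ eA) → a = c) ∧
    (u1 ⬝ᵥ eB = -(u3 ⬝ᵥ eB) → a = c) := by
  have hs : 0 < √D := Real.sqrt_pos.mpr hDpos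
  have hsq : √D ^ 2 = D := Real.sq_sqrt hDpos.le
  have hne : (a - c - √D) / (2 * b) ≠ (a - c + √D) / (2 * b) := by
    intro h
    rw [div_left_inj' (by positivity)] at h
    linarith
  have hprod : (a - c - √D) / (2 * b) * ((a - c + √D) / (2 * b)) = -1 := by
    field_simp
    linear_combination -hsq - hD
  have hsum : (a - c - √D) / (2 * b) + (a - c + √D) / (2 * b) = (a - c) / b := by
    field_simp
    ring
  generalize (a - c - √D) / (2 * b) = x at *
  generalize (a - c + √D) / (2 * b) = y at *
  subst hu1 hu3 heA heB
  simp only [dotProduct, Fin.sum_univ_three, Pi.smul_apply, smul_eq_mul, cons_val_zero,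
    cons_val_one, cons_val, mul_zero, zero_add, add_zero, mul_one] at hu1unit hu3unit ⊢
  have hx : ρ1 ^ 2 = x ^ 2 + 1 := by
    field_simp at hu1unit
    linarith
  have hy : ρ2 ^ 2 = y ^ 2 + 1 := by
    field_simp at hu3unit
    linarith
  constructor
  · intro h
    have h' : x * ρ2 = -(y * ρ1) := by
      field_simp at h
      linarith
    have hxy : (x - y) * (x + y) = 0 := by
      linear_combination (x * ρ2 - y * ρ1) * h' - x ^ 2 * hy + y ^ 2 * hx
    have h0 : (a - c) / b = 0 :=
      hsum ▸ (mul_eq_zero.mp hxy).resolve_left (sub_ne_zero.mpr hne)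
    exact sub_eq_zero.mp ((div_eq_zero_iff.mp h0).resolve_right hb)
  · intro h
    have h' : (x + 1) * ρ2 = -((y + 1) * ρ1) := by
      field_simp at h
      linarith
    have hxy : x - y = 0 := by
      linear_combination (1 / 4) * ((x + 1) * ρ2 - (y + 1) * ρ1) * h' - (1 / 4) * (x + 1) ^ 2 * hy
        + (1 / 4) * (y + 1) ^ 2 * hx + (x - y) / 2 * hprod
    exact absurd (sub_eq_zero.mp hxy) hne
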